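/- arXiv:2101.10947 — 3 statements merged into one kernel-verified Lean document; each statement's English description precedes it below -/
import Mathlib

section
/- Let X and Z be integrable real-valued random variables on a probability space (Ω, 𝓕, P), let α ∈ (0,1) and δ ∈ (0, 1−α). Then q_{X+Z}(α) ≤ q_X(α+δ) + q_Z(1−δ). (First inequality of the paper's Value-at-Risk subadditivity lemma, in the unconditional case: VaR_α(−(X+Z)) ≤ VaR_{α+δ}(−X) + VaR_{1−δ}(−Z).) -/
open MeasureTheory

/-- Lower quantile function: `q_X(u) = inf {y : P(X ≤ y) ≥ u}` (the paper's `VaR_u(-X)`,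
unconditional case). -/
noncomputable def lowerQuantile {Ω : Type*} [MeasurableSpace Ω] (P : Measure Ω)
    (X : Ω → ℝ) (u : ℝ) : ℝ :=
  sInf {y : ℝ | u ≤ (P {ω | X ω ≤ y}).toReal}

/-!
If `P(X ≤ x) ≥ α + δ` and `P(Z ≤ z) ≥ 1 - δ`, then the two events overlap in probability at least
`α`, and on the overlap `X + Z ≤ x + z`. Hence `x + z` is an upper bound for the `α`-quantile of
`X + Z`; now take infima over `z` and over `x`. As infima in `ℝ` have junk values, this needs the
level sets of the distribution functions to be nonempty and bounded below, which follows from the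
limits of a distribution function at `±∞`.
-/

section

open Filter Set
open scoped Topology

variable {Ω : Type*} [MeasurableSpace Ω] {P : Measure Ω} [IsFiniteMeasure P]

lemma tendsto_measureReal_setOf_le_atTop {E : Type*} [Preorder E]
    [(atTop : Filter E).IsCountablyGenerated] (X : Ω → E) :
    Tendsto (fun y => P.real {ω | X ω ≤ y}) atTop (𝓝 (P.real univ)) := by
  have hmono : Monotone fun y => {ω | X ω ≤ y} := fun _ _ hyz _ hω => hω.trans hyz
  have hunion : ⋃ y, {ω | X ω ≤ y} = univ := iUnion_eq_univ_iff.2 fun ω => ⟨X ω, le_rfl⟩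
  have hlim := tendsto_measure_iUnion_atTop (μ := P) hmono
  rw [hunion] at hlim
  exact (ENNReal.tendsto_toReal (measure_ne_top P univ)).comp hlim

lemma tendsto_measureReal_setOf_le_atBot {E : Type*} [Preorder E] [Nonempty E] [NoMinOrder E]
    [(atBot : Filter E).IsCountablyGenerated] [TopologicalSpace E] [ClosedIicTopology E]
    [MeasurableSpace E] [OpensMeasurableSpace E] {X : Ω → E} (hX : AEMeasurable X P) :
    Tendsto (fun y => P.real {ω | X ω ≤ y}) atBot (𝓝 0) := by
  have hmeas (y : E) : NullMeasurableSet {ω | X ω ≤ y} P := hX.nullMeasurable measurableSet_Iic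
  have hmono : Monotone fun y => {ω | X ω ≤ y} := fun _ _ hyz _ hω => hω.trans hyz
  have hinter : ⋂ y, {ω | X ω ≤ y} = ∅ :=
    iInter_eq_empty_iff.2 fun ω => (exists_lt (X ω)).imp fun _ hy => hy.not_ge
  have hlim := tendsto_measure_iInter_atBot hmeas hmono
    ⟨Classical.arbitrary E, measure_ne_top P _⟩
  rw [hinter, measure_empty] at hlim
  exact (ENNReal.tendsto_toReal ENNReal.zero_ne_top).comp hlim

lemma nonempty_setOf_le_measureReal_setOf_le {X : Ω → ℝ} {u : ℝ} (hu : u < P.real univ) :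
    {y : ℝ | u ≤ P.real {ω | X ω ≤ y}}.Nonempty :=
  ((tendsto_measureReal_setOf_le_atTop X).eventually_const_le hu).exists

lemma bddBelow_setOf_le_measureReal_setOf_le {X : Ω → ℝ} (hX : AEMeasurable X P) {u : ℝ}
    (hu : 0 < u) : BddBelow {y : ℝ | u ≤ P.real {ω | X ω ≤ y}} := by
  obtain ⟨b, hb⟩ := ((tendsto_measureReal_setOf_le_atBot hX).eventually_lt_const hu).exists
  refine ⟨b, fun y hy => le_of_not_gt fun hyb => hb.not_ge ?_⟩
  exact hy.trans (measureReal_mono fun _ hω => hω.trans hyb.le)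

lemma lowerQuantile_le {X : Ω → ℝ} (hX : AEMeasurable X P) {u y : ℝ} (hu : 0 < u)
    (hy : u ≤ P.real {ω | X ω ≤ y}) : lowerQuantile P X u ≤ y :=
  csInf_le (bddBelow_setOf_le_measureReal_setOf_le hX hu) hy

lemma le_lowerQuantile {X : Ω → ℝ} {u b : ℝ} (hu : u < P.real univ)
    (hb : ∀ y, u ≤ P.real {ω | X ω ≤ y} → b ≤ y) : b ≤ lowerQuantile P X u :=
  le_csInf (nonempty_setOf_le_measureReal_setOf_le hu) hb

lemma measureReal_add_sub_univ_le_inter (s : Set Ω) {t : Set Ω} (ht : NullMeasurableSet t P) :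
    P.real s + P.real t - P.real univ ≤ P.real (s ∩ t) := by
  have hunion : P.real (s ∪ t) ≤ P.real univ := measureReal_mono (subset_univ _)
  linarith [measureReal_union_add_inter₀ (s := s) ht]

lemma measureReal_setOf_le_add_sub_univ_le {E : Type*} [Preorder E] [Add E] [AddLeftMono E]
    [AddRightMono E] [TopologicalSpace E] [ClosedIicTopology E] [MeasurableSpace E]
    [OpensMeasurableSpace E] (X : Ω → E) {Z : Ω → E} (hZ : AEMeasurable Z P) (x z : E) :
    P.real {ω | X ω ≤ x} + P.real {ω | Z ω ≤ z} - P.real univ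
      ≤ P.real {ω | X ω + Z ω ≤ x + z} :=
  calc P.real {ω | X ω ≤ x} + P.real {ω | Z ω ≤ z} - P.real univ
      ≤ P.real ({ω | X ω ≤ x} ∩ {ω | Z ω ≤ z}) :=
        measureReal_add_sub_univ_le_inter _ (hZ.nullMeasurable measurableSet_Iic)
    _ ≤ P.real {ω | X ω + Z ω ≤ x + z} :=
        measureReal_mono fun ω ⟨hXx, hZz⟩ =>
          show X ω + Z ω ≤ x + z from add_le_add hXx hZz

theorem var_subadditivity_upper_general {X Z : Ω → ℝ} (hX : AEMeasurable X P)
    (hZ : AEMeasurable Z P) {α δ : ℝ} (hα : 0 < α) (hδ : 0 < δ) (hαδ : α + δ < P.real univ) :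
    lowerQuantile P (fun ω => X ω + Z ω) α
      ≤ lowerQuantile P X (α + δ) + lowerQuantile P Z (P.real univ - δ) := by
  have hbound (x z : ℝ) (hx : α + δ ≤ P.real {ω | X ω ≤ x})
      (hz : P.real univ - δ ≤ P.real {ω | Z ω ≤ z}) :
      lowerQuantile P (fun ω => X ω + Z ω) α ≤ x + z :=
    lowerQuantile_le (hX.fun_add hZ) hα <| by
      linarith [measureReal_setOf_le_add_sub_univ_le X hZ x z]
  rw [← sub_le_iff_le_add]
  refine le_lowerQuantile hαδ fun x hx => ?_
  rw [sub_le_comm]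
  refine le_lowerQuantile (sub_lt_self _ hδ) fun z hz => ?_
  exact sub_le_iff_le_add'.2 (hbound x z hx hz)

end

/-- First inequality of the paper's Value-at-Risk subadditivity lemma, unconditional case:
`VaR_α(-(X+Z)) ≤ VaR_{α+δ}(-X) + VaR_{1-δ}(-Z)`. -/
theorem var_subadditivity_upper
    {Ω : Type*} [MeasurableSpace Ω] (P : Measure Ω) [IsProbabilityMeasure P]
    (X Z : Ω → ℝ) (hXm : Measurable X) (hZm : Measurable Z)
    (hX : Integrable X P) (hZ : Integrable Z P)
    (α δ : ℝ) (hα : α ∈ Set.Ioo (0 : ℝ) 1) (hδ : δ ∈ Set.Ioo (0 : ℝ) (1 - α)) :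
    lowerQuantile P (fun ω => X ω + Z ω) α
      ≤ lowerQuantile P X (α + δ) + lowerQuantile P Z (1 - δ) := by
  have hmass : P.real Set.univ = 1 := probReal_univ
  have hαδ : α + δ < P.real Set.univ := hmass ▸ lt_sub_iff_add_lt'.1 hδ.2
  exact hmass ▸ var_subadditivity_upper_general hXm.aemeasurable hZm.aemeasurable hα.1 hδ.1 hαδ
end

section
/- Let X and Y be integrable real-valued random variables on a probability space (Ω, 𝓕, P), let η ≥ 0 be a constant, let α ∈ (0,1) and let δ satisfy 0 < δ < min(α, 1−α, 1/2). Then φ_{α−δ}(X) − (2/δ)·E[|X−Y|] ≤ φ_α(Y) ≤ φ_{α+δ}(X) + (2/δ)·E[|X−Y|]. (Unconditional case of the sandwich inequality in the paper's Theorem on the Lipschitz-like property of the cost-of-capital valuation φ.) -/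
open MeasureTheory

/-- One-step cost-of-capital valuation:
`φ_α(Y) = q_Y(α) - (1/(1+η)) * E[(q_Y(α) - Y)⁺]`. -/
noncomputable def cocValuation {Ω : Type*} [MeasurableSpace Ω] (P : Measure Ω)
    (η α : ℝ) (Y : Ω → ℝ) : ℝ :=
  lowerQuantile P Y α
    - (1 / (1 + η)) * ∫ ω, max (lowerQuantile P Y α - Y ω) 0 ∂P

/-!
Let `D = E|X - Y|`. By Markov's inequality `P(Y - X > D/δ) ≤ δ`, so that
`q_Y(α) ≤ q_X(α + δ) + D/δ`. The map `q ↦ q - c E[(q - Y)⁺]` is nondecreasing and 1-Lipschitz for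
`c ∈ [0, 1]`, and exchanging `Y` for `X` in it costs at most `D ≤ D/δ`; hence the upper bound.
The lower bound is the upper bound at level `α - δ` with `X` and `Y` exchanged.
-/

lemma measureReal_integral_div_lt_le {Ω : Type*} [MeasurableSpace Ω] {P : Measure Ω} {f : Ω → ℝ}
    {δ : ℝ} (hf₀ : 0 ≤ᵐ[P] f) (hf : Integrable f P) (hδ : 0 < δ) :
    P.real {ω | (∫ ω, f ω ∂P) / δ < f ω} ≤ δ := by
  rcases (integral_nonneg_of_ae hf₀).eq_or_lt with hzero | hpos
  · have hf_ae : f =ᵐ[P] 0 := (integral_eq_zero_iff_of_nonneg_ae hf₀ hf).1 hzero.symm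
    have hnull : P {ω | (∫ ω, f ω ∂P) / δ < f ω} = 0 := by
      refine measure_mono_null (fun ω hω => ?_) (ae_iff.1 hf_ae)
      rw [← hzero, zero_div] at hω
      exact ne_of_gt hω
    simpa only [measureReal_def, hnull, ENNReal.toReal_zero] using hδ.le
  · have hmarkov := mul_meas_ge_le_integral_of_nonneg hf₀ hf ((∫ ω, f ω ∂P) / δ)
    rw [div_mul_eq_mul_div, div_le_iff₀ hδ, mul_le_mul_iff_right₀ hpos] at hmarkov
    have hsub : {ω | (∫ ω, f ω ∂P) / δ < f ω} ⊆ {ω | (∫ ω, f ω ∂P) / δ ≤ f ω} :=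
      Set.ofPred_subset_ofPred.2 fun _ => le_of_lt
    exact (measureReal_mono hsub (hf.measure_ge_lt_top (div_pos hpos hδ)).ne).trans hmarkov

section Quantile

open Filter Topology

variable {Ω : Type*} [MeasurableSpace Ω] {P : Measure Ω} [IsFiniteMeasure P]
  {X Y : Ω → ℝ} {u s δ : ℝ}

lemma nonempty_setOfPred_le_measure_le (X : Ω → ℝ) (hu : u < P.real Set.univ) :
    {y : ℝ | u ≤ (P {ω | X ω ≤ y}).toReal}.Nonempty := by
  have hmono : Monotone fun y : ℝ => {ω | X ω ≤ y} := fun _ _ hab _ hω => le_trans hω hab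
  have hunion : ⋃ y : ℝ, {ω | X ω ≤ y} = Set.univ :=
    Set.iUnion_eq_univ_iff.2 fun ω => ⟨X ω, le_refl (X ω)⟩
  have hlim : Tendsto (fun y : ℝ => P.real {ω | X ω ≤ y}) atTop (𝓝 (P.real Set.univ)) := by
    rw [← hunion]
    exact (ENNReal.tendsto_toReal (measure_ne_top P _)).comp (tendsto_measure_iUnion_atTop hmono)
  obtain ⟨y, hy⟩ := (hlim.eventually_const_lt hu).exists
  exact ⟨y, hy.le⟩

lemma bddBelow_setOfPred_le_measure_le (hX : AEMeasurable X P) (hu : 0 < u) :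
    BddBelow {y : ℝ | u ≤ (P {ω | X ω ≤ y}).toReal} := by
  have hmono : Monotone fun y : ℝ => {ω | X ω ≤ y} := fun _ _ hab _ hω => le_trans hω hab
  have hinter : ⋂ y : ℝ, {ω | X ω ≤ y} = ∅ :=
    Set.iInter_eq_empty_iff.2 fun ω => ⟨X ω - 1, not_le.2 (sub_one_lt (X ω))⟩
  have hlim : Tendsto (fun y : ℝ => P.real {ω | X ω ≤ y}) atBot (𝓝 0) := by
    rw [← measureReal_empty (μ := P), ← hinter]
    exact (ENNReal.tendsto_toReal (measure_ne_top P _)).comp <|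
      tendsto_measure_iInter_atBot (fun _ => hX.nullMeasurable measurableSet_Iic) hmono
        ⟨0, measure_ne_top P _⟩
  obtain ⟨y, hy⟩ := (hlim.eventually_lt_const hu).exists
  refine ⟨y, fun z (hz : u ≤ P.real {ω | X ω ≤ z}) => ?_⟩
  by_contra! hzy
  exact (hz.trans (measureReal_mono (hmono hzy.le))).not_gt hy

lemma lowerQuantile_le_lowerQuantile_add_add (hY : AEMeasurable Y P) (hu : 0 < u)
    (huδ : u + δ < P.real Set.univ) (hs : P.real {ω | s < Y ω - X ω} ≤ δ) :
    lowerQuantile P Y u ≤ lowerQuantile P X (u + δ) + s := by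
  rw [← sub_le_iff_le_add]
  refine le_csInf (nonempty_setOfPred_le_measure_le X huδ) fun y (hy : u + δ ≤ P.real _) => ?_
  rw [sub_le_iff_le_add]
  refine csInf_le (bddBelow_setOfPred_le_measure_le hY hu) ?_
  have hsub : {ω | X ω ≤ y} ⊆ {ω | Y ω ≤ y + s} ∪ {ω | s < Y ω - X ω} := by
    intro ω (hω : X ω ≤ y)
    rcases le_or_gt (Y ω - X ω) s with h | h
    · exact Or.inl (by change Y ω ≤ y + s; linarith)
    · exact Or.inr h
  have hunion := (measureReal_mono (μ := P) hsub).trans (measureReal_union_le _ _)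
  change u ≤ P.real {ω | Y ω ≤ y + s}
  linarith

lemma lowerQuantile_le_lowerQuantile_add_add_integral_div (hY : AEMeasurable Y P)
    (hXY : Integrable (fun ω => X ω - Y ω) P) (hu : 0 < u) (hδ : 0 < δ)
    (huδ : u + δ < P.real Set.univ) :
    lowerQuantile P Y u ≤ lowerQuantile P X (u + δ) + (∫ ω, |X ω - Y ω| ∂P) / δ := by
  refine lowerQuantile_le_lowerQuantile_add_add hY hu huδ ?_
  refine (measureReal_mono fun ω hω => ?_).trans
    (measureReal_integral_div_lt_le (.of_forall fun ω => abs_nonneg (X ω - Y ω)) hXY.abs hδ)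
  exact lt_of_lt_of_le hω (abs_sub_comm (X ω) (Y ω) ▸ le_abs_self (Y ω - X ω))

end Quantile

section CapitalValue

variable {Ω : Type*} [MeasurableSpace Ω] {P : Measure Ω} {X Y : Ω → ℝ} {c q r : ℝ}

/-- The value `q - c E[(q - Y)⁺]` of a residual payoff `Y` backed by capital `q`, with discount
factor `c`. The cost-of-capital valuation is the case `c = 1 / (1 + η)`, `q = q_Y(α)`; keeping `q`
free separates the dependence on the capital level from the dependence on `Y`. -/
noncomputable def capitalValue (P : Measure Ω) (c q : ℝ) (Y : Ω → ℝ) : ℝ :=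
  q - c * ∫ ω, max (q - Y ω) 0 ∂P

lemma cocValuation_eq_capitalValue (P : Measure Ω) (η α : ℝ) (Y : Ω → ℝ) :
    cocValuation P η α Y = capitalValue P (1 / (1 + η)) (lowerQuantile P Y α) Y :=
  rfl

lemma aemeasurable_of_integrable_sub (hX : AEMeasurable X P)
    (hXY : Integrable (fun ω => X ω - Y ω) P) : AEMeasurable Y P :=
  (hX.sub hXY.aemeasurable).congr (.of_forall fun ω => sub_sub_cancel (X ω) (Y ω))

lemma integrable_max_neg_zero_of_integrable_sub (hX : AEMeasurable X P)
    (hXneg : Integrable (fun ω => max (-X ω) 0) P) (hXY : Integrable (fun ω => X ω - Y ω) P) :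
    Integrable (fun ω => max (-Y ω) 0) P := by
  have hY := aemeasurable_of_integrable_sub hX hXY
  refine (hXneg.add hXY.abs).mono' (hY.neg.max aemeasurable_const).aestronglyMeasurable
    (.of_forall fun ω => ?_)
  have hlip := abs_max_sub_max_le_abs (-Y ω) (-X ω) 0
  rw [neg_sub_neg] at hlip
  rw [Real.norm_of_nonneg (le_max_right _ _), Pi.add_apply]
  linarith [le_abs_self (max (-Y ω) 0 - max (-X ω) 0)]

lemma integrable_max_sub_zero [IsFiniteMeasure P] (hX : AEMeasurable X P)
    (hXneg : Integrable (fun ω => max (-X ω) 0) P) (q : ℝ) :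
    Integrable (fun ω => max (q - X ω) 0) P := by
  have hshift : Integrable (fun ω => X ω - (X ω - q)) P := by simp
  simpa using integrable_max_neg_zero_of_integrable_sub hX hXneg hshift

lemma capitalValue_mono [IsProbabilityMeasure P] (hc₀ : 0 ≤ c) (hc₁ : c ≤ 1)
    (hX : AEMeasurable X P) (hXneg : Integrable (fun ω => max (-X ω) 0) P) :
    Monotone fun q => capitalValue P c q X := by
  intro q r hqr
  have hq := integrable_max_sub_zero hX hXneg q
  have hshortfall : ∫ ω, max (r - X ω) 0 ∂P ≤ ∫ ω, max (q - X ω) 0 ∂P + (r - q) := calc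
    ∫ ω, max (r - X ω) 0 ∂P ≤ ∫ ω, (max (q - X ω) 0 + (r - q)) ∂P := by
      refine integral_mono (integrable_max_sub_zero hX hXneg r) (hq.add (integrable_const _))
        fun ω => max_le ?_ (add_nonneg (le_max_right _ _) (sub_nonneg.2 hqr))
      linarith [le_max_left (q - X ω) 0]
    _ = ∫ ω, max (q - X ω) 0 ∂P + (r - q) := by
      rw [integral_add hq (integrable_const _), integral_const, probReal_univ, one_smul]
  have hdiscount : c * (r - q) ≤ r - q := mul_le_of_le_one_left (sub_nonneg.2 hqr) hc₁
  have hscaled := mul_le_mul_of_nonneg_left hshortfall hc₀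
  simp only [capitalValue]
  linarith

lemma capitalValue_le_add_sub [IsFiniteMeasure P] (hc : 0 ≤ c) (hX : AEMeasurable X P)
    (hXneg : Integrable (fun ω => max (-X ω) 0) P) (hqr : q ≤ r) :
    capitalValue P c r X ≤ capitalValue P c q X + (r - q) := by
  have hshortfall : ∫ ω, max (q - X ω) 0 ∂P ≤ ∫ ω, max (r - X ω) 0 ∂P :=
    integral_mono (integrable_max_sub_zero hX hXneg q) (integrable_max_sub_zero hX hXneg r)
      fun ω => max_le_max_right 0 (sub_le_sub_right hqr (X ω))
  have hscaled := mul_le_mul_of_nonneg_left hshortfall hc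
  simp only [capitalValue]
  linarith

lemma capitalValue_le_add_integral_abs_sub (hc : 0 ≤ c)
    (hX : Integrable (fun ω => max (q - X ω) 0) P) (hY : Integrable (fun ω => max (q - Y ω) 0) P)
    (hXY : Integrable (fun ω => X ω - Y ω) P) :
    capitalValue P c q Y ≤ capitalValue P c q X + c * ∫ ω, |X ω - Y ω| ∂P := by
  have hshortfall : ∫ ω, max (q - X ω) 0 ∂P ≤
      ∫ ω, max (q - Y ω) 0 ∂P + ∫ ω, |X ω - Y ω| ∂P := by
    rw [← integral_add hY hXY.abs]
    refine integral_mono hX (hY.add hXY.abs) fun ω => ?_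
    have hlip := abs_max_sub_max_le_abs (q - X ω) (q - Y ω) 0
    rw [sub_sub_sub_cancel_left, abs_sub_comm (Y ω)] at hlip
    linarith [le_abs_self (max (q - X ω) 0 - max (q - Y ω) 0)]
  have hscaled := mul_le_mul_of_nonneg_left hshortfall hc
  simp only [capitalValue]
  linarith

end CapitalValue

lemma cocValuation_le_cocValuation_add_add {Ω : Type*} [MeasurableSpace Ω] {P : Measure Ω}
    [IsProbabilityMeasure P] {X Y : Ω → ℝ} {η u δ : ℝ} (hX : AEMeasurable X P)
    (hXneg : Integrable (fun ω => max (-X ω) 0) P) (hXY : Integrable (fun ω => X ω - Y ω) P)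
    (hη : 0 ≤ η) (hu : 0 < u) (hδ : 0 < δ) (huδ : u + δ < 1) :
    cocValuation P η u Y ≤ cocValuation P η (u + δ) X + (2 / δ) * ∫ ω, |X ω - Y ω| ∂P := by
  have hY := aemeasurable_of_integrable_sub hX hXY
  have hYneg := integrable_max_neg_zero_of_integrable_sub hX hXneg hXY
  have hquantile := lowerQuantile_le_lowerQuantile_add_add_integral_div hY hXY hu hδ
    (huδ.trans_eq probReal_univ.symm)
  simp only [cocValuation_eq_capitalValue]
  set c := 1 / (1 + η)
  set D := ∫ ω, |X ω - Y ω| ∂P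
  set b := lowerQuantile P X (u + δ)
  have hc₀ : 0 ≤ c := by positivity
  have hc₁ : c ≤ 1 := div_le_one_of_le₀ (by linarith) (by linarith)
  have hD : 0 ≤ D := integral_nonneg fun _ => abs_nonneg _
  have hDδ : D ≤ D / δ := le_div_self hD hδ (by linarith)
  have hcD : c * D ≤ D / δ := (mul_le_of_le_one_left hD hc₁).trans hDδ
  calc capitalValue P c (lowerQuantile P Y u) Y
      ≤ capitalValue P c (b + D / δ) Y := capitalValue_mono hc₀ hc₁ hY hYneg hquantile
    _ ≤ capitalValue P c b Y + (b + D / δ - b) :=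
      capitalValue_le_add_sub hc₀ hY hYneg (le_add_of_nonneg_right (hD.trans hDδ))
    _ ≤ capitalValue P c b X + c * D + (b + D / δ - b) := by
      gcongr
      exact capitalValue_le_add_integral_abs_sub hc₀ (integrable_max_sub_zero hX hXneg b)
        (integrable_max_sub_zero hY hYneg b) hXY
    _ ≤ capitalValue P c b X + D / δ + (b + D / δ - b) := by gcongr
    _ = capitalValue P c b X + 2 / δ * D := by ring

theorem coc_lipschitz_like_sandwich_general {Ω : Type*} [MeasurableSpace Ω] {P : Measure Ω}
    [IsProbabilityMeasure P] {X Y : Ω → ℝ} {η α δ : ℝ} (hX : AEMeasurable X P)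
    (hXneg : Integrable (fun ω => max (-X ω) 0) P) (hXY : Integrable (fun ω => X ω - Y ω) P)
    (hη : 0 ≤ η) (hδ : 0 < δ) (hδα : δ < α) (hαδ : α + δ < 1) :
    cocValuation P η (α - δ) X - (2 / δ) * ∫ ω, |X ω - Y ω| ∂P ≤ cocValuation P η α Y ∧
      cocValuation P η α Y ≤ cocValuation P η (α + δ) X + (2 / δ) * ∫ ω, |X ω - Y ω| ∂P := by
  have hY := aemeasurable_of_integrable_sub hX hXY
  have hYneg := integrable_max_neg_zero_of_integrable_sub hX hXneg hXY
  have hYX : Integrable (fun ω => Y ω - X ω) P := by simpa only [neg_sub] using hXY.fun_neg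
  refine ⟨?_, cocValuation_le_cocValuation_add_add hX hXneg hXY hη (hδ.trans hδα) hδ hαδ⟩
  have hswapped := cocValuation_le_cocValuation_add_add hY hYneg hYX hη (sub_pos.2 hδα) hδ
    (by linarith)
  simp only [sub_add_cancel, abs_sub_comm (Y _) (X _)] at hswapped
  exact sub_le_iff_le_add.2 hswapped

/-- Unconditional case of the sandwich inequality in the paper's Theorem on the
Lipschitz-like property of the cost-of-capital valuation `φ`:
`φ_{α-δ}(X) - (2/δ)E|X-Y| ≤ φ_α(Y) ≤ φ_{α+δ}(X) + (2/δ)E|X-Y|`. -/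
theorem coc_lipschitz_like_sandwich
    {Ω : Type*} [MeasurableSpace Ω] (P : Measure Ω) [IsProbabilityMeasure P]
    (X Y : Ω → ℝ) (hXm : Measurable X) (hYm : Measurable Y)
    (hX : Integrable X P) (hY : Integrable Y P)
    (η : ℝ) (hη : 0 ≤ η)
    (α δ : ℝ) (hα : α ∈ Set.Ioo (0 : ℝ) 1)
    (hδ : 0 < δ) (hδ' : δ < min α (min (1 - α) (1 / 2))) :
    cocValuation P η (α - δ) X - (2 / δ) * ∫ ω, |X ω - Y ω| ∂P ≤ cocValuation P η α Y ∧
      cocValuation P η α Y ≤ cocValuation P η (α + δ) X + (2 / δ) * ∫ ω, |X ω - Y ω| ∂P := by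
  obtain ⟨hδα, hδα', -⟩ := by simpa only [lt_min_iff] using hδ'
  exact coc_lipschitz_like_sandwich_general hXm.aemeasurable hX.neg_part (hX.sub hY) hη hδ hδα
    (lt_sub_iff_add_lt'.1 hδα')
end

section
/- Let (Ω, 𝓕, P) be a probability space and let m : (0,1) → ℝ be a nonincreasing, nonnegative function bounded above by a constant m₀ with ∫₀¹ m(u) du = 1. For an integrable real-valued random variable Y define the spectral risk measure ρ_m(Y) := −∫₀¹ q_Y(u)·m(u) du. Assume in addition that ρ_m is subadditive on integrable random variables, i.e. ρ_m(X + Y) ≤ ρ_m(X) + ρ_m(Y) whenever X, Y and X+Y are integrable. Then for all integrable X, Y one has |ρ_m(X) − ρ_m(Y)| ≤ m₀·E[|X − Y|]. (Unconditional case of the Lipschitz part of the paper's Lemma on spectral risk measures, with Lipschitz constant m(0).) -/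
open MeasureTheory

/-- Spectral risk measure with spectrum `m`: `ρ_m(Y) = -∫₀¹ q_Y(u) m(u) du`. -/
noncomputable def spectralRisk {Ω : Type*} [MeasurableSpace Ω] (P : Measure Ω)
    (m : ℝ → ℝ) (Y : Ω → ℝ) : ℝ :=
  -∫ u in Set.Ioo (0 : ℝ) 1, lowerQuantile P Y u * m u

/-! The quantile function `q_X` on `(0, 1)` has the distribution of `X` and is monotone in `X`.
With `Z = max X Y` these two facts give
`∫ |q_X - q_Y| ≤ ∫ (q_Z - q_X) + ∫ (q_Z - q_Y) = E[2 Z - X - Y] = E|X - Y|`,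
and integrating against a spectrum bounded by `m₀` costs at most a factor `m₀`. -/

open ProbabilityTheory Set

section CDF

variable {μ : Measure ℝ} {u : ℝ}

lemma nonempty_setOf_le_cdf (hu : u < 1) : {y | u ≤ cdf μ y}.Nonempty :=
  ((tendsto_cdf_atTop μ).eventually_const_le hu).exists

lemma bddBelow_setOf_le_cdf (hu : 0 < u) : BddBelow {y | u ≤ cdf μ y} := by
  obtain ⟨a, ha⟩ := ((tendsto_cdf_atBot μ).eventually_lt_const hu).exists
  exact ⟨a, fun y hy => ((monotone_cdf μ).reflect_lt (ha.trans_le hy)).le⟩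

lemma sInf_setOf_le_cdf_le_iff (hu : u ∈ Ioo (0 : ℝ) 1) {x : ℝ} :
    sInf {y | u ≤ cdf μ y} ≤ x ↔ u ≤ cdf μ x := by
  refine ⟨fun h => ?_, fun h => csInf_le (bddBelow_setOf_le_cdf hu.1) h⟩
  rw [← (cdf μ).iInf_Ioi_eq x]
  refine le_ciInf fun z => ?_
  obtain ⟨y, hy, hyz⟩ := exists_lt_of_csInf_lt (nonempty_setOf_le_cdf hu.2) (h.trans_lt z.2)
  exact hy.trans (monotone_cdf μ hyz.le)

end CDF

section Quantile

variable {Ω : Type*} [MeasurableSpace Ω] {P : Measure Ω} [IsProbabilityMeasure P] {X Y : Ω → ℝ}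

lemma cdf_map_apply (hX : AEMeasurable X P) (x : ℝ) :
    cdf (P.map X) x = P.real {ω | X ω ≤ x} := by
  have := Measure.isProbabilityMeasure_map hX
  rw [cdf_eq_real, map_measureReal_apply_of_aemeasurable hX measurableSet_Iic]
  rfl

lemma lowerQuantile_eq_sInf_cdf (hX : AEMeasurable X P) (u : ℝ) :
    lowerQuantile P X u = sInf {y | u ≤ cdf (P.map X) y} := by
  simp only [lowerQuantile, cdf_map_apply hX, measureReal_def]

lemma lowerQuantile_le_iff (hX : AEMeasurable X P) {u : ℝ} (hu : u ∈ Ioo (0 : ℝ) 1) {x : ℝ} :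
    lowerQuantile P X u ≤ x ↔ u ≤ cdf (P.map X) x := by
  rw [lowerQuantile_eq_sInf_cdf hX, sInf_setOf_le_cdf_le_iff hu]

lemma monotoneOn_lowerQuantile (hX : AEMeasurable X P) :
    MonotoneOn (lowerQuantile P X) (Ioo 0 1) := fun _ ha _ hb hab =>
  (lowerQuantile_le_iff hX ha).2 (hab.trans ((lowerQuantile_le_iff hX hb).1 le_rfl))

lemma aemeasurable_lowerQuantile (hX : AEMeasurable X P) :
    AEMeasurable (lowerQuantile P X) (volume.restrict (Ioo 0 1)) :=
  aemeasurable_restrict_of_monotoneOn measurableSet_Ioo (monotoneOn_lowerQuantile hX)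

lemma cdf_map_le_cdf_map_of_ae_le (hX : AEMeasurable X P) (hY : AEMeasurable Y P)
    (h : X ≤ᵐ[P] Y) (x : ℝ) : cdf (P.map Y) x ≤ cdf (P.map X) x := by
  rw [cdf_map_apply hX, cdf_map_apply hY]
  exact ENNReal.toReal_mono (measure_ne_top _ _) <|
    measure_mono_ae (h.mono fun _ hXY hYx => hXY.trans hYx)

lemma lowerQuantile_le_lowerQuantile_of_ae_le (hX : AEMeasurable X P) (hY : AEMeasurable Y P)
    (h : X ≤ᵐ[P] Y) {u : ℝ} (hu : u ∈ Ioo (0 : ℝ) 1) :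
    lowerQuantile P X u ≤ lowerQuantile P Y u :=
  (lowerQuantile_le_iff hX hu).2 <|
    ((lowerQuantile_le_iff hY hu).1 le_rfl).trans (cdf_map_le_cdf_map_of_ae_le hX hY h _)

lemma identDistrib_lowerQuantile (hX : AEMeasurable X P) :
    IdentDistrib (lowerQuantile P X) X (volume.restrict (Ioo 0 1)) P where
  aemeasurable_fst := aemeasurable_lowerQuantile hX
  aemeasurable_snd := hX
  map_eq := by
    have := Measure.isProbabilityMeasure_map hX
    refine Measure.ext_of_Iic _ _ fun x => ?_
    have hpre : lowerQuantile P X ⁻¹' Iic x =ᵐ[volume.restrict (Ioo 0 1)]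
        Iic (cdf (P.map X) x) := by
      filter_upwards [ae_restrict_mem measurableSet_Ioo] with u hu
      exact propext (lowerQuantile_le_iff hX hu)
    calc (volume.restrict (Ioo 0 1)).map (lowerQuantile P X) (Iic x)
      _ = volume.restrict (Ioo 0 1) (Iic (cdf (P.map X) x)) := by
        rw [Measure.map_apply_of_aemeasurable (aemeasurable_lowerQuantile hX) measurableSet_Iic,
          measure_congr hpre]
      _ = volume (Ioc 0 (cdf (P.map X) x)) := by
        rw [Measure.restrict_congr_set Ioo_ae_eq_Ioc, Measure.restrict_apply measurableSet_Iic,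
          inter_comm, Ioc_inter_Iic, min_eq_right (cdf_le_one _ _)]
      _ = P.map X (Iic x) := by rw [Real.volume_Ioc, sub_zero, ofReal_cdf]

lemma integrableOn_lowerQuantile (hX : Integrable X P) :
    IntegrableOn (lowerQuantile P X) (Ioo 0 1) :=
  (identDistrib_lowerQuantile hX.aemeasurable).integrable_iff.2 hX

lemma integral_lowerQuantile (hX : AEMeasurable X P) :
    ∫ u in Ioo (0 : ℝ) 1, lowerQuantile P X u = ∫ ω, X ω ∂P :=
  (identDistrib_lowerQuantile hX).integral_eq

lemma abs_lowerQuantile_sub_le (hX : AEMeasurable X P) (hY : AEMeasurable Y P)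
    {u : ℝ} (hu : u ∈ Ioo (0 : ℝ) 1) :
    |lowerQuantile P X u - lowerQuantile P Y u| ≤
      2 * lowerQuantile P (X ⊔ Y) u - (lowerQuantile P X u + lowerQuantile P Y u) := by
  have hXZ : lowerQuantile P X u ≤ lowerQuantile P (X ⊔ Y) u :=
    lowerQuantile_le_lowerQuantile_of_ae_le hX (hX.sup hY) (ae_of_all P fun _ => le_sup_left) hu
  have hYZ : lowerQuantile P Y u ≤ lowerQuantile P (X ⊔ Y) u :=
    lowerQuantile_le_lowerQuantile_of_ae_le hY (hX.sup hY) (ae_of_all P fun _ => le_sup_right) hu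
  exact abs_le.2 ⟨by linarith, by linarith⟩

/-- The left-hand side is the Wasserstein distance `W₁` between the laws of `X` and `Y`. -/
lemma integral_abs_lowerQuantile_sub_le (hX : Integrable X P) (hY : Integrable Y P) :
    ∫ u in Ioo (0 : ℝ) 1, |lowerQuantile P X u - lowerQuantile P Y u| ≤ ∫ ω, |X ω - Y ω| ∂P := by
  have hqX := integrableOn_lowerQuantile hX
  have hqY := integrableOn_lowerQuantile hY
  have hqZ := (integrableOn_lowerQuantile (hX.sup hY)).const_mul 2
  calc ∫ u in Ioo (0 : ℝ) 1, |lowerQuantile P X u - lowerQuantile P Y u|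
    _ ≤ ∫ u in Ioo (0 : ℝ) 1,
          (2 * lowerQuantile P (X ⊔ Y) u - (lowerQuantile P X u + lowerQuantile P Y u)) :=
      setIntegral_mono_on (hqX.sub hqY).abs (hqZ.sub (hqX.fun_add hqY)) measurableSet_Ioo
        fun _ hu => abs_lowerQuantile_sub_le hX.aemeasurable hY.aemeasurable hu
    _ = 2 * ∫ ω, (X ⊔ Y) ω ∂P - (∫ ω, X ω ∂P + ∫ ω, Y ω ∂P) := by
      rw [integral_sub hqZ (hqX.fun_add hqY), integral_add hqX hqY, integral_const_mul,
        integral_lowerQuantile (hX.sup hY).aemeasurable, integral_lowerQuantile hX.aemeasurable,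
        integral_lowerQuantile hY.aemeasurable]
    _ = ∫ ω, (2 * (X ⊔ Y) ω - (X ω + Y ω)) ∂P := by
      rw [integral_sub ((hX.sup hY).const_mul 2) (hX.fun_add hY), integral_add hX hY,
        integral_const_mul]
    _ = ∫ ω, |X ω - Y ω| ∂P := by
      refine integral_congr_ae (ae_of_all P fun ω => ?_)
      have := two_nsmul_sup_eq_add_add_abs_sub (X ω) (Y ω)
      simp only [Pi.sup_apply, two_nsmul, abs_sub_comm (X ω)] at this ⊢
      linarith

theorem spectral_risk_lipschitz_general {m : ℝ → ℝ} {m₀ : ℝ}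
    (hm : AEStronglyMeasurable m (volume.restrict (Ioo 0 1)))
    (hbdd : ∀ᵐ u ∂volume.restrict (Ioo 0 1), |m u| ≤ m₀)
    (hX : Integrable X P) (hY : Integrable Y P) :
    |spectralRisk P m X - spectralRisk P m Y| ≤ m₀ * ∫ ω, |X ω - Y ω| ∂P := by
  have hqX := integrableOn_lowerQuantile hX
  have hqY := integrableOn_lowerQuantile hY
  have hm₀ : 0 ≤ m₀ := by
    have : (ae (volume.restrict (Ioo (0 : ℝ) 1))).NeBot := ae_restrict_neBot.2 (by simp)
    obtain ⟨u, hu⟩ := hbdd.exists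
    exact (abs_nonneg _).trans hu
  calc |spectralRisk P m X - spectralRisk P m Y|
    _ = |∫ u in Ioo (0 : ℝ) 1, (lowerQuantile P X u - lowerQuantile P Y u) * m u| := by
      simp only [spectralRisk, sub_mul]
      rw [integral_sub (hqX.mul_bdd hm hbdd) (hqY.mul_bdd hm hbdd), neg_sub_neg, abs_sub_comm]
    _ ≤ ∫ u in Ioo (0 : ℝ) 1, m₀ * |lowerQuantile P X u - lowerQuantile P Y u| := by
      rw [← Real.norm_eq_abs]
      refine norm_integral_le_of_norm_le ((hqX.fun_sub hqY).abs.const_mul m₀)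
        (hbdd.mono fun u hu => ?_)
      rw [Real.norm_eq_abs, abs_mul, mul_comm]
      gcongr
    _ ≤ m₀ * ∫ ω, |X ω - Y ω| ∂P := by
      rw [integral_const_mul]
      gcongr
      exact integral_abs_lowerQuantile_sub_le hX hY

end Quantile

/-- Unconditional case of the Lipschitz part of the paper's Lemma on spectral risk
measures: a subadditive spectral risk measure with spectrum bounded by `m₀` is
Lipschitz with constant `m₀`. -/
theorem spectral_risk_lipschitz
    {Ω : Type*} [MeasurableSpace Ω] (P : Measure Ω) [IsProbabilityMeasure P]
    (m : ℝ → ℝ) (m₀ : ℝ)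
    (hanti : AntitoneOn m (Set.Ioo (0 : ℝ) 1))
    (hnonneg : ∀ u ∈ Set.Ioo (0 : ℝ) 1, 0 ≤ m u)
    (hbdd : ∀ u ∈ Set.Ioo (0 : ℝ) 1, m u ≤ m₀)
    (hnorm : ∫ u in Set.Ioo (0 : ℝ) 1, m u = 1)
    (hsub : ∀ X Y : Ω → ℝ, Integrable X P → Integrable Y P →
      Integrable (fun ω => X ω + Y ω) P →
      spectralRisk P m (fun ω => X ω + Y ω) ≤ spectralRisk P m X + spectralRisk P m Y) :
    ∀ X Y : Ω → ℝ, Measurable X → Measurable Y → Integrable X P → Integrable Y P →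
      |spectralRisk P m X - spectralRisk P m Y| ≤ m₀ * ∫ ω, |X ω - Y ω| ∂P := by
  intro X Y _ _ hX hY
  exact spectral_risk_lipschitz_general
    (aemeasurable_restrict_of_antitoneOn measurableSet_Ioo hanti).aestronglyMeasurable
    ((ae_restrict_mem measurableSet_Ioo).mono fun u hu =>
      (abs_of_nonneg (hnonneg u hu)).trans_le (hbdd u hu)) hX hY
end
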